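/- Let n ≥ 1, c_u ∈ (0,1), C_u ∈ (1,∞), and let U ⊊ ℝⁿ be an unbounded (c_u,C_u)-uniform domain with nonempty boundary. Let h : closure(U) → ℝ be continuous, positive and harmonic on U, and identically 0 on ∂U. Then there exists a constant A ∈ [1,∞), depending only on n, c_u and C_u, such that for every x ∈ U, every r > 0, and every point x_r ∈ U with d_U(x,x_r) ≤ r/4 and dist(x_r, ∂U) ≥ c_u·r/8, one has A⁻¹ · h(x_r)² · rⁿ ≤ ∫_{B_U(x,r)} h² dλ ≤ A · h(x_r)² · rⁿ, where λ is Lebesgue measure and B_U(x,r) = {y ∈ U : d_U(x,y) < r}. -/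

import Mathlib

open Set Metric MeasureTheory ENNReal

noncomputable section

abbrev En (n : ℕ) := EuclideanSpace ℝ (Fin n)

/-- The length of the curve `γ : [0,1] → X`, defined as the supremum of sums
`∑ d(γ(t_i), γ(t_{i-1}))` over partitions `0 ≤ t₀ < … < t_k ≤ 1`. -/
def curveLength {X : Type*} [PseudoEMetricSpace X] (γ : ℝ → X) : ℝ≥0∞ :=
  eVariationOn γ (Set.Icc 0 1)

/-- `γ` is a continuous curve in `Ω` from `x` to `y`. -/
def IsCurveIn {X : Type*} [PseudoEMetricSpace X] (Ω : Set X) (x y : X) (γ : ℝ → X) : Prop :=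
  ContinuousOn γ (Set.Icc 0 1) ∧ Set.MapsTo γ (Set.Icc 0 1) Ω ∧ γ 0 = x ∧ γ 1 = y

/-- The inner (pseudo)metric of `Ω`: the infimum of lengths of continuous curves
joining `x` to `y` inside `Ω`. -/
def innerDist {X : Type*} [PseudoEMetricSpace X] (Ω : Set X) (x y : X) : ℝ≥0∞ :=
  ⨅ (γ : ℝ → X) (_ : IsCurveIn Ω x y γ), curveLength γ

/-- `U` is a `(c,C)`-uniform domain in `ℝⁿ`. -/
def IsUniformDomain {n : ℕ} (c C : ℝ) (U : Set (En n)) : Prop :=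
  IsOpen U ∧ IsConnected U ∧
    ∀ x ∈ U, ∀ y ∈ U, ∃ γ : ℝ → En n, IsCurveIn U x y γ ∧
      curveLength γ ≤ ENNReal.ofReal (C * dist x y) ∧
      ∀ t ∈ Set.Icc (0:ℝ) 1,
        c * min (dist x (γ t)) (dist (γ t) y) ≤ Metric.infDist (γ t) (frontier U)

/-- The Laplacian `∑ ∂²f/∂xᵢ²` of `f : ℝⁿ → ℝ`. -/
def lap {n : ℕ} (f : En n → ℝ) (x : En n) : ℝ :=
  ∑ i : Fin n,
    fderiv ℝ (fun y => fderiv ℝ f y (EuclideanSpace.single i 1)) x (EuclideanSpace.single i 1)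

/-- `f` is harmonic on the open set `V`: twice continuously differentiable with
vanishing Laplacian. -/
def IsHarmonicOn {n : ℕ} (f : En n → ℝ) (V : Set (En n)) : Prop :=
  ContDiffOn ℝ 2 f V ∧ ∀ x ∈ V, lap f x = 0


open Topology Filter

/-! ### Weighted mean value inequality -/

theorem hasDerivAt_posPow (k : ℕ) (t : ℝ) :
    HasDerivAt (fun s : ℝ => max s 0 ^ (k + 2)) ((k + 2) * max t 0 ^ (k + 1)) t := by
  rcases lt_trichotomy t 0 with ht | ht | ht
  · have h1 : (fun s : ℝ => max s 0 ^ (k + 2)) =ᶠ[𝓝 t] fun _ => 0 := by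
      filter_upwards [gt_mem_nhds ht] with s hs
      simp [max_eq_right hs.le]
    have h2 := (hasDerivAt_const t (0:ℝ)).congr_of_eventuallyEq h1
    simpa [max_eq_right ht.le] using h2
  · subst ht
    simp only [max_self, ne_eq, Nat.add_eq_zero_iff, one_ne_zero, and_false, not_false_eq_true,
      zero_pow, mul_zero]
    rw [hasDerivAt_iff_isLittleO]
    simp only [max_self, ne_eq, Nat.add_eq_zero_iff, two_ne_zero, and_false, not_false_eq_true,
      zero_pow, sub_zero, smul_zero]
    have h1 : (fun s : ℝ => max s 0 ^ (k + 2)) =O[𝓝 0] fun s : ℝ => s ^ (k+2) := by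
      refine Asymptotics.IsBigO.of_bound 1 (Eventually.of_forall fun s => ?_)
      rw [one_mul, norm_pow, norm_pow]
      refine pow_le_pow_left₀ (norm_nonneg _) ?_ _
      rw [Real.norm_eq_abs, Real.norm_eq_abs, abs_of_nonneg (le_max_right _ _)]
      exact max_le (le_abs_self s) (abs_nonneg s)
    refine h1.trans_isLittleO ?_
    exact Asymptotics.isLittleO_pow_id (by omega)
  · have h1 : (fun s : ℝ => max s 0 ^ (k + 2)) =ᶠ[𝓝 t] fun s => s ^ (k+2) := by
      filter_upwards [lt_mem_nhds ht] with s hs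
      simp [max_eq_left hs.le]
    have h2 := (hasDerivAt_pow (k+2) t).congr_of_eventuallyEq h1
    simpa [max_eq_left ht.le] using h2

theorem contDiff_posCube : ContDiff ℝ 2 (fun s : ℝ => max s 0 ^ 3) := by
  have d1 : deriv (fun s : ℝ => max s 0 ^ 3) = fun s => 3 * max s 0 ^ 2 := by
    ext t
    have := (hasDerivAt_posPow 1 t).deriv
    norm_num at this
    exact this
  have d2 : ∀ t, HasDerivAt (fun s : ℝ => 3 * max s 0 ^ 2) (6 * max t 0) t := by
    intro t
    have := (hasDerivAt_posPow 0 t).const_mul 3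
    refine this.congr_deriv ?_
    simp; ring
  have h2 : (2 : WithTop ℕ∞) = 1 + 1 := by norm_num
  rw [h2, contDiff_succ_iff_deriv]
  refine ⟨fun t => (hasDerivAt_posPow 1 t).differentiableAt, by simp, ?_⟩
  rw [d1, contDiff_one_iff_deriv]
  refine ⟨fun t => (d2 t).differentiableAt, ?_⟩
  have : deriv (fun s : ℝ => 3 * max s 0 ^ 2) = fun t => 6 * max t 0 := by
    ext t; exact (d2 t).deriv
  rw [this]
  fun_prop

/-- the weight -/
def wgt {n : ℕ} (y : En n) : ℝ := max (1 - ‖y‖ ^ 2) 0 ^ 2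

def psi {n : ℕ} (y : En n) : ℝ := max (1 - ‖y‖ ^ 2) 0 ^ 3

theorem wgt_nonneg {n : ℕ} (y : En n) : 0 ≤ wgt y := by unfold wgt; positivity

theorem psi_nonneg {n : ℕ} (y : En n) : 0 ≤ psi y := by unfold psi; positivity

theorem wgt_le_one {n : ℕ} (y : En n) : wgt y ≤ 1 := by
  unfold wgt
  have : max (1 - ‖y‖ ^ 2) 0 ≤ 1 := max_le (by nlinarith [sq_nonneg ‖y‖]) zero_le_one
  exact pow_le_one₀ (le_max_right _ _) this

theorem wgt_continuous {n : ℕ} : Continuous (wgt (n := n)) := by unfold wgt; fun_prop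

theorem psi_contDiff {n : ℕ} : ContDiff ℝ 2 (psi (n := n)) := by
  unfold psi
  exact contDiff_posCube.comp (contDiff_const.sub (contDiff_norm_sq ℝ))

theorem wgt_zero {n : ℕ} {y : En n} (hy : 1 ≤ ‖y‖) : wgt y = 0 := by
  unfold wgt
  rw [max_eq_right (by nlinarith)]; simp

theorem psi_zero {n : ℕ} {y : En n} (hy : 1 ≤ ‖y‖) : psi y = 0 := by
  unfold psi
  rw [max_eq_right (by nlinarith)]; simp

theorem wgt_lower {n : ℕ} {y : En n} (hy : ‖y‖ ≤ 3/4) : 1/8 ≤ wgt y := by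
  unfold wgt
  have h0 := norm_nonneg y
  have : (7/16 : ℝ) ≤ max (1 - ‖y‖ ^ 2) 0 := le_trans (by nlinarith) (le_max_left _ _)
  nlinarith

theorem wgt_lower' {n : ℕ} {y : En n} (hy : ‖y‖ ≤ 1/2) : 1/2 ≤ wgt y := by
  unfold wgt
  have h0 := norm_nonneg y
  have : (3/4 : ℝ) ≤ max (1 - ‖y‖ ^ 2) 0 := le_trans (by nlinarith) (le_max_left _ _)
  nlinarith

theorem compactSupp_of_zero {n : ℕ} {f : En n → ℝ} (hf : ∀ y, 1 ≤ ‖y‖ → f y = 0) :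
    HasCompactSupport f := by
  refine HasCompactSupport.of_support_subset_isCompact (isCompact_closedBall (0 : En n) 1) ?_
  intro y hy
  by_contra h
  simp only [mem_closedBall, dist_zero_right, not_le] at h
  exact hy (hf y h.le)

theorem integrable_of_zero {n : ℕ} {f : En n → ℝ} (hc : Continuous f)
    (hf : ∀ y, 1 ≤ ‖y‖ → f y = 0) : Integrable f :=
  hc.integrable_of_hasCompactSupport (compactSupp_of_zero hf)

theorem psi_fderiv {n : ℕ} (y v : En n) :
    fderiv ℝ psi y v = - 6 * wgt y * inner ℝ y v := by
  have h1 : HasFDerivAt (fun y : En n => 1 - ‖y‖ ^ 2) (-(2 • (innerSL ℝ y))) y := by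
    have := (hasStrictFDerivAt_norm_sq y).hasFDerivAt.const_sub 1
    exact this
  have h2 := (hasDerivAt_posPow 1 (1 - ‖y‖^2)).comp_hasFDerivAt y h1
  have h3 : HasFDerivAt (psi (n := n)) _ y := h2
  rw [h3.fderiv]
  simp [wgt]
  ring

theorem wgt_parts {n : ℕ} {v : En n → ℝ} (hv : ContDiff ℝ 2 v) (x : En n) (s : ℝ) :
    ∫ y, wgt y * fderiv ℝ v (x + s • y) y = (s / 6) * ∫ y, psi y * lap v (x + s • y) := by
  have hv1 : ContDiff ℝ 1 (fderiv ℝ v) := hv.fderiv_right (by norm_num)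
  have hpc : Continuous (psi (n := n)) := psi_contDiff.continuous
  have hgi : ∀ i : Fin n, ContDiff ℝ 1 (fun y => fderiv ℝ v y (EuclideanSpace.single i 1)) :=
    fun i => hv1.clm_apply contDiff_const
  have hggi : ∀ i : Fin n, Continuous (fun y => fderiv ℝ
      (fun y => fderiv ℝ v y (EuclideanSpace.single i 1)) y (EuclideanSpace.single i 1)) :=
    fun i => ((hgi i).continuous_fderiv (by norm_num)).clm_apply continuous_const
  have key : ∀ i : Fin n, ∫ y : En n, wgt y * (y i * fderiv ℝ v (x + s • y) (EuclideanSpace.single i 1))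
      = (s/6) * ∫ y, psi y * fderiv ℝ
      (fun y => fderiv ℝ v y (EuclideanSpace.single i 1)) (x + s • y) (EuclideanSpace.single i 1) := by
    intro i
    set g : En n → ℝ := fun y => fderiv ℝ v (x + s • y) (EuclideanSpace.single i 1) with hg
    have hgd : ∀ y, fderiv ℝ g y (EuclideanSpace.single i 1) = s * fderiv ℝ
      (fun y => fderiv ℝ v y (EuclideanSpace.single i 1)) (x + s • y) (EuclideanSpace.single i 1) := by
      intro y
      have h1 : HasFDerivAt (fun y : En n => x + s • y) (s • ContinuousLinearMap.id ℝ (En n)) y :=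
        ((hasFDerivAt_id y).const_smul s).const_add x
      have h2 : HasFDerivAt g _ y :=
        HasFDerivAt.comp (g := fun y => fderiv ℝ v y (EuclideanSpace.single i 1)) y
        (((hgi i).differentiable (by norm_num)) (x + s • y)).hasFDerivAt h1
      rw [h2.fderiv]
      simp
    have hgc : ContDiff ℝ 1 g := (hgi i).comp (contDiff_const.add (contDiff_id.const_smul s))
    have ib := integral_mul_fderiv_eq_neg_fderiv_mul_of_integrable (μ := (volume : Measure (En n)))
      (f := psi) (g := g) (v := EuclideanSpace.single i 1) ?_ ?_ ?_
      (fun y _ => (psi_contDiff.differentiable (by norm_num)) y)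
      (fun y _ => (hgc.differentiable (by norm_num)) y)
    · simp only [hgd, psi_fderiv] at ib
      have e1 : ∀ y : En n, -6 * wgt y * inner ℝ y (EuclideanSpace.single i (1:ℝ)) * g y =
          (-6) * (wgt y * (y i * g y)) := by
        intro y
        have : inner ℝ y (EuclideanSpace.single i (1:ℝ)) = y i := by
          rw [EuclideanSpace.inner_single_right]; simp
        rw [this]; ring
      have e2 : ∀ y : En n, psi y * (s * fderiv ℝ
      (fun y => fderiv ℝ v y (EuclideanSpace.single i 1)) (x + s • y) (EuclideanSpace.single i 1))
        = s * (psi y * fderiv ℝ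
      (fun y => fderiv ℝ v y (EuclideanSpace.single i 1)) (x + s • y) (EuclideanSpace.single i 1)) :=
        fun y => by ring
      simp only [e1, e2, integral_const_mul] at ib
      linarith
    · refine integrable_of_zero ?_ (fun y hy => by rw [psi_fderiv, wgt_zero hy]; simp)
      exact ((psi_contDiff.continuous_fderiv (by norm_num)).clm_apply continuous_const).mul
        hgc.continuous
    · refine integrable_of_zero ?_ (fun y hy => by rw [psi_zero hy]; simp)
      exact hpc.mul ((hgc.continuous_fderiv (by norm_num)).clm_apply continuous_const)
    · exact integrable_of_zero (hpc.mul hgc.continuous) (fun y hy => by rw [psi_zero hy]; simp)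
  have e3 : ∀ y : En n, wgt y * fderiv ℝ v (x + s • y) y =
      ∑ i, wgt y * (y i * fderiv ℝ v (x + s • y) (EuclideanSpace.single i 1)) := by
    intro y
    rw [← Finset.mul_sum]
    congr 1
    have hy : y = ∑ i, y i • EuclideanSpace.single i (1:ℝ) := by
      have := (EuclideanSpace.basisFun (Fin n) ℝ).sum_repr y
      simpa using this.symm
    conv_lhs => rw [hy]
    rw [map_sum]
    refine Finset.sum_congr rfl fun i _ => ?_
    rw [map_smul, ← hy]; simp
  have hci : Continuous fun y : En n => x + s • y := by fun_prop
  simp only [e3]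
  rw [integral_finsetSum]
  · simp only [key]
    rw [← Finset.mul_sum, ← integral_finsetSum]
    · simp only [lap, Finset.mul_sum]
    · intro i _
      exact integrable_of_zero (hpc.mul ((hggi i).comp hci)) (fun y hy => by rw [psi_zero hy]; simp)
  · intro i _
    refine integrable_of_zero (wgt_continuous.mul (Continuous.mul (by fun_prop)
      ((hgi i).continuous.comp hci))) (fun y hy => by rw [wgt_zero hy]; simp)

theorem wgt_deriv {n : ℕ} {v : En n → ℝ} (hv : ContDiff ℝ 2 v) (x : En n) (s : ℝ) :
    HasDerivAt (fun s : ℝ => ∫ y, wgt y * v (x + s • y))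
      (∫ y, wgt y * fderiv ℝ v (x + s • y) y) s := by
  have hv1 : ContDiff ℝ 1 (fderiv ℝ v) := hv.fderiv_right (by norm_num)
  have hcont : Continuous fun p : ℝ × En n => fderiv ℝ v (x + p.1 • p.2) p.2 :=
    (hv1.continuous.comp (by fun_prop)).clm_apply (by fun_prop)
  obtain ⟨C, hC⟩ := ((isCompact_closedBall s 1).prod
    (isCompact_closedBall (0 : En n) 1)).exists_bound_of_continuousOn hcont.continuousOn
  refine (hasDerivAt_integral_of_dominated_loc_of_deriv_le (μ := (volume : Measure (En n)))
    (F := fun s y => wgt y * v (x + s • y)) (F' := fun s y => wgt y * fderiv ℝ v (x + s • y) y)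
    (s := ball s 1) (bound := fun y => wgt y * C)
    (ball_mem_nhds s one_pos) ?_ ?_ ?_ ?_ ?_ ?_).2
  · refine Eventually.of_forall fun t => ?_
    exact (wgt_continuous.mul (hv.continuous.comp (by fun_prop))).aestronglyMeasurable
  · exact integrable_of_zero (wgt_continuous.mul (hv.continuous.comp (by fun_prop)))
      (fun y hy => by rw [wgt_zero hy]; simp)
  · exact (wgt_continuous.mul (hcont.comp (f := fun y => (s, y)) (by fun_prop))).aestronglyMeasurable
  · refine Eventually.of_forall fun y t ht => ?_
    rcases le_or_gt 1 ‖y‖ with hy | hy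
    · simp [wgt_zero hy]
    · rw [norm_mul, Real.norm_of_nonneg (wgt_nonneg y)]
      refine mul_le_mul_of_nonneg_left ?_ (wgt_nonneg y)
      exact hC (t, y) ⟨ball_subset_closedBall ht, by simpa using hy.le⟩
  · exact (integrable_of_zero wgt_continuous (fun y hy => wgt_zero hy)).mul_const C
  · refine Eventually.of_forall fun y t _ => ?_
    refine HasDerivAt.const_mul _ ?_
    have h1 : HasDerivAt (fun t : ℝ => x + t • y) y t := by
      simpa using ((hasDerivAt_id t).smul_const y).const_add x
    exact ((hv.differentiable (by norm_num)) (x + t • y)).hasFDerivAt.comp_hasDerivAt t h1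

/-- total weight -/
def wtot (n : ℕ) : ℝ := ∫ y : En n, wgt y

theorem wgt_integrable {n : ℕ} : Integrable (wgt (n := n)) :=
  integrable_of_zero wgt_continuous (fun _ hy => wgt_zero hy)

theorem mean_value_aux {n : ℕ} {v : En n → ℝ} (hv : ContDiff ℝ 2 v) (x : En n) {R : ℝ} (hR : 0 ≤ R)
    (hl : ∀ y ∈ closedBall x R, 0 ≤ lap v y) :
    v x * wtot n ≤ ∫ y, wgt y * v (x + R • y) := by
  have hm : MonotoneOn (fun s : ℝ => ∫ y, wgt y * v (x + s • y)) (Icc 0 R) := by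
    refine monotoneOn_of_deriv_nonneg (convex_Icc 0 R)
      (fun s _ => (wgt_deriv hv x s).continuousAt.continuousWithinAt)
      (fun s _ => (wgt_deriv hv x s).differentiableAt.differentiableWithinAt) ?_
    intro s hs
    rw [interior_Icc] at hs
    rw [(wgt_deriv hv x s).deriv, wgt_parts hv]
    refine mul_nonneg (by linarith [hs.1]) (integral_nonneg fun y => ?_)
    rcases le_or_gt 1 ‖y‖ with hy | hy
    · simp [psi_zero hy]
    · refine mul_nonneg (psi_nonneg y) (hl _ ?_)
      rw [mem_closedBall, dist_eq_norm, add_sub_cancel_left, norm_smul, Real.norm_of_nonneg hs.1.le]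
      nlinarith [hs.1, hs.2, norm_nonneg y]
  have := hm (left_mem_Icc.2 hR) (right_mem_Icc.2 hR) hR
  simp only [zero_smul, add_zero, integral_mul_const] at this
  rw [mul_comm]; exact this

/-- the kernel -/
def mker {n : ℕ} (x : En n) (R : ℝ) (y : En n) : ℝ := wgt (R⁻¹ • (y - x))

theorem mker_nonneg {n : ℕ} (x : En n) (R : ℝ) (y : En n) : 0 ≤ mker x R y := wgt_nonneg _

theorem mker_continuous {n : ℕ} (x : En n) (R : ℝ) : Continuous (mker x R) :=
  wgt_continuous.comp (by fun_prop)

theorem mker_norm {n : ℕ} (x y : En n) {R : ℝ} (hR : 0 < R) : ‖R⁻¹ • (y - x)‖ = dist y x / R := by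
  rw [norm_smul, norm_inv, Real.norm_of_nonneg hR.le, dist_eq_norm, div_eq_inv_mul]

theorem mker_zero {n : ℕ} {x y : En n} {R : ℝ} (hR : 0 < R) (hy : R ≤ dist y x) : mker x R y = 0 := by
  refine wgt_zero ?_
  rw [mker_norm x y hR, le_div_iff₀ hR]; linarith

theorem mker_integral {n : ℕ} (x : En n) {R : ℝ} (hR : 0 < R) (v : En n → ℝ) :
    ∫ y, mker x R y * v y = R ^ n * ∫ y, wgt y * v (x + R • y) := by
  have h1 := Measure.integral_comp_smul (volume : Measure (En n))
    (fun z => wgt (R⁻¹ • z) * v (x + z)) R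
  simp only [smul_smul, inv_mul_cancel₀ hR.ne', one_smul] at h1
  rw [h1]
  have h2 := integral_add_left_eq_self (μ := (volume : Measure (En n))) (fun y => mker x R y * v y) x
  rw [← h2]
  simp only [mker, add_sub_cancel_left, finrank_euclideanSpace_fin, smul_eq_mul]
  rw [abs_of_nonneg (by positivity), ← mul_assoc, mul_inv_cancel₀ (by positivity), one_mul]

theorem wtot_pos (n : ℕ) : 0 < wtot n := by
  unfold wtot
  rw [integral_pos_iff_support_of_nonneg wgt_nonneg wgt_integrable]
  refine lt_of_lt_of_le (measure_ball_pos volume (0 : En n) (by norm_num : (0:ℝ) < 1/2))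
    (measure_mono ?_)
  intro y hy
  have := wgt_lower' (y := y) (by simpa using (mem_ball.1 hy).le)
  simp only [Function.mem_support]; linarith

theorem mker_total {n : ℕ} (x : En n) {R : ℝ} (hR : 0 < R) :
    ∫ y, mker x R y = R ^ n * wtot n := by
  have := mker_integral x hR (fun _ => 1)
  simpa [wtot] using this

theorem mker_integrable {n : ℕ} (x : En n) {R : ℝ} (hR : 0 < R) : Integrable (mker x R) := by
  refine (mker_continuous x R).integrable_of_hasCompactSupport ?_
  refine HasCompactSupport.of_support_subset_isCompact (isCompact_closedBall x R) ?_
  intro y hy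
  by_contra h
  simp only [mem_closedBall, not_le] at h
  exact hy (mker_zero hR h.le)

theorem mean_value_global {n : ℕ} {v : En n → ℝ} (hv : ContDiff ℝ 2 v) (x : En n) {R : ℝ}
    (hR : 0 < R) (hl : ∀ y ∈ closedBall x R, 0 ≤ lap v y) :
    v x * (R ^ n * wtot n) ≤ ∫ y, mker x R y * v y := by
  rw [mker_integral x hR]
  have := mean_value_aux hv x hR.le hl
  have h2 : 0 < R ^ n := by positivity
  nlinarith

/-! ### Harmonic profiles -/

theorem lap_congr {n : ℕ} {f g : En n → ℝ} {x : En n} (h : f =ᶠ[𝓝 x] g) : lap f x = lap g x := by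
  unfold lap
  refine Finset.sum_congr rfl fun i _ => ?_
  have : (fun y => fderiv ℝ f y (EuclideanSpace.single i 1)) =ᶠ[𝓝 x]
      (fun y => fderiv ℝ g y (EuclideanSpace.single i 1)) := by
    filter_upwards [h.eventuallyEq_nhds] with y hy
    rw [hy.fderiv_eq]
  rw [this.fderiv_eq]

theorem lap_neg {n : ℕ} (f : En n → ℝ) (x : En n) : lap (fun y => - f y) x = - lap f x := by
  unfold lap
  simp [fderiv_fun_neg]

theorem lap_const {n : ℕ} (a : ℝ) (x : En n) : lap (fun _ : En n => a) x = 0 := by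
  unfold lap
  simp

/-- A nonnegative continuous function on the whole space which is positive and harmonic on `U`
and vanishes off `U`. -/
structure Prof {n : ℕ} (U : Set (En n)) (g : En n → ℝ) : Prop where
  op : IsOpen U
  cont : Continuous g
  pos : ∀ z ∈ U, 0 < g z
  zero : ∀ z, z ∉ U → g z = 0
  harm : IsHarmonicOn g U

theorem Prof.nonneg {n : ℕ} {U : Set (En n)} {g : En n → ℝ} (P : Prof U g) (z : En n) : 0 ≤ g z := by
  by_cases hz : z ∈ U
  · exact (P.pos z hz).le
  · exact (P.zero z hz).ge

theorem Prof.contDiffAt {n : ℕ} {U : Set (En n)} {g : En n → ℝ} (P : Prof U g) {z : En n}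
    (hz : z ∈ U) : ContDiffAt ℝ 2 g z := P.harm.1.contDiffAt (P.op.mem_nhds hz)

theorem mker_mul_integrable {n : ℕ} (x : En n) {R : ℝ} (hR : 0 < R) {f : En n → ℝ}
    (hf : Continuous f) : Integrable fun y => mker x R y * f y := by
  refine ((mker_continuous x R).mul hf).integrable_of_hasCompactSupport ?_
  refine HasCompactSupport.of_support_subset_isCompact (isCompact_closedBall x R) ?_
  intro y hy
  by_contra h
  simp only [mem_closedBall, not_le] at h
  exact hy (by simp [mker_zero hR h.le])

theorem Prof.mean_value {n : ℕ} {U : Set (En n)} {g : En n → ℝ} (P : Prof U g) {x : En n} {R : ℝ}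
    (hR : 0 < R) (hx : closedBall x (2 * R) ⊆ U) :
    g x * (R ^ n * wtot n) = ∫ y, mker x R y * g y := by
  let f : ContDiffBump x := ⟨3 / 2 * R, 2 * R, by linarith, by linarith⟩
  set v : En n → ℝ := fun y => f y * g y with hv
  have hin : ∀ y ∈ closedBall x R, v =ᶠ[𝓝 y] g := by
    intro y hy
    have : ball x (3 / 2 * R) ∈ 𝓝 y := by
      refine isOpen_ball.mem_nhds ?_
      rw [mem_ball]; rw [mem_closedBall] at hy; linarith
    filter_upwards [this] with z hz
    have : f z = 1 := f.one_of_mem_closedBall (ball_subset_closedBall hz)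
    simp [hv, this]
  have hin' : ∀ y ∈ closedBall x R, v y = g y := fun y hy => (hin y hy).eq_of_nhds
  have hvc : ContDiff ℝ 2 v := by
    rw [contDiff_iff_contDiffAt]
    intro p
    by_cases hp : p ∈ U
    · exact (f.contDiffAt).mul (P.contDiffAt hp)
    · have h1 : p ∉ tsupport f := by
        rw [f.tsupport_eq]
        exact fun h => hp (hx h)
      have h2 : v =ᶠ[𝓝 p] fun _ => 0 := by
        filter_upwards [notMem_tsupport_iff_eventuallyEq.1 h1] with z hz
        simp [hv, hz]
      exact contDiffAt_const.congr_of_eventuallyEq h2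
  have hlap : ∀ y ∈ closedBall x R, lap v y = 0 := by
    intro y hy
    rw [lap_congr (hin y hy)]
    refine P.harm.2 y (hx (closedBall_subset_closedBall (by linarith) hy))
  have hint : ∀ y, mker x R y * v y = mker x R y * g y := by
    intro y
    by_cases hy : y ∈ closedBall x R
    · rw [hin' y hy]
    · simp only [mem_closedBall, not_le] at hy
      simp [mker_zero hR hy.le]
  have a1 := mean_value_global hvc x hR (fun y hy => (hlap y hy).ge)
  have a2 := mean_value_global hvc.neg x hR (fun y hy => by
    have := lap_neg v y
    have h3 := hlap y hy
    change 0 ≤ lap (fun y => - v y) y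
    rw [this, h3]; simp)
  simp only [mul_neg, integral_neg, hint] at a1 a2
  rw [hin' x (mem_closedBall_self hR.le)] at a1 a2
  linarith

theorem Prof.cut_lap {n : ℕ} {U : Set (En n)} {g : En n → ℝ} (P : Prof U g) (ε : ℝ) {p : En n}
    (hp : p ∈ U) : 0 ≤ lap (fun y => max (g y - ε) 0 ^ 3) p := by
  unfold lap
  have hd : ∀ y ∈ U, HasFDerivAt g (fderiv ℝ g y) y := fun y hy =>
    ((P.contDiffAt hy).differentiableAt (by norm_num)).hasFDerivAt
  have h1 : ∀ i : Fin n, (fun y => fderiv ℝ (fun y => max (g y - ε) 0 ^ 3) y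
      (EuclideanSpace.single i 1)) =ᶠ[𝓝 p] fun y => (3 * max (g y - ε) 0 ^ 2) *
      fderiv ℝ g y (EuclideanSpace.single i 1) := by
    intro i
    filter_upwards [P.op.mem_nhds hp] with y hy
    have a1 := (hasDerivAt_posPow 1 (g y - ε)).comp_hasFDerivAt y ((hd y hy).sub_const ε)
    have a2 : HasFDerivAt (fun y => max (g y - ε) 0 ^ 3) _ y := a1
    rw [a2.fderiv]
    simp
    left; norm_num
  have h2 : ∀ i : Fin n, fderiv ℝ (fun y => fderiv ℝ (fun y => max (g y - ε) 0 ^ 3) y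
      (EuclideanSpace.single i 1)) p (EuclideanSpace.single i 1) =
      (3 * max (g p - ε) 0 ^ 2) * fderiv ℝ (fun y => fderiv ℝ g y (EuclideanSpace.single i 1)) p
        (EuclideanSpace.single i 1)
      + 6 * max (g p - ε) 0 * (fderiv ℝ g p (EuclideanSpace.single i 1)) ^ 2 := by
    intro i
    rw [(h1 i).fderiv_eq]
    have a1 := (hasDerivAt_posPow 0 (g p - ε)).comp_hasFDerivAt p ((hd p hp).sub_const ε)
    have a2 : HasFDerivAt (fun y => max (g y - ε) 0 ^ 2) _ p := a1
    have a3 : DifferentiableAt ℝ (fun y => fderiv ℝ g y (EuclideanSpace.single i 1)) p := by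
      have : ContDiffAt ℝ 1 (fderiv ℝ g) p := (P.contDiffAt hp).fderiv_right (by norm_num)
      exact (this.differentiableAt (by norm_num)).clm_apply (differentiableAt_const _)
    have a4 := (a2.const_mul 3).mul a3.hasFDerivAt
    have a5 : HasFDerivAt (fun y => (3 * max (g y - ε) 0 ^ 2) *
      fderiv ℝ g y (EuclideanSpace.single i 1)) _ p := a4
    rw [a5.fderiv]
    simp
    ring
  simp only [h2]
  rw [Finset.sum_add_distrib, ← Finset.mul_sum]
  have h3 : ∑ i : Fin n, fderiv ℝ (fun y => fderiv ℝ g y (EuclideanSpace.single i 1)) p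
        (EuclideanSpace.single i 1) = 0 := P.harm.2 p hp
  rw [h3, mul_zero, zero_add]
  exact Finset.sum_nonneg fun i _ => by positivity

theorem Prof.sub_mean {n : ℕ} {U : Set (En n)} {g : En n → ℝ} (P : Prof U g) (x : En n) {R : ℝ}
    (hR : 0 < R) : g x ^ 3 * (R ^ n * wtot n) ≤ ∫ y, mker x R y * g y ^ 3 := by
  have key : ∀ ε : ℝ, 0 < ε →
      max (g x - ε) 0 ^ 3 * (R ^ n * wtot n) ≤ ∫ y, mker x R y * g y ^ 3 := by
    intro ε hε
    have hz : ∀ p, p ∉ U → (fun y => max (g y - ε) 0 ^ 3) =ᶠ[𝓝 p] fun _ => 0 := by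
      intro p hp
      have : ∀ᶠ y in 𝓝 p, g y < ε := P.cont.continuousAt.eventually_lt_const (by rw [P.zero p hp]; exact hε)
      filter_upwards [this] with y hy
      rw [max_eq_right (by linarith)]; simp
    have hvc : ContDiff ℝ 2 (fun y => max (g y - ε) 0 ^ 3) := by
      rw [contDiff_iff_contDiffAt]
      intro p
      by_cases hp : p ∈ U
      · exact contDiff_posCube.contDiffAt.comp p ((P.contDiffAt hp).sub contDiffAt_const)
      · exact contDiffAt_const.congr_of_eventuallyEq (hz p hp)
    refine (mean_value_global hvc x hR (fun p _ => ?_)).trans ?_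
    · by_cases hp : p ∈ U
      · exact P.cut_lap ε hp
      · rw [lap_congr (hz p hp), lap_const]
    · refine integral_mono (mker_mul_integrable x hR hvc.continuous)
        (mker_mul_integrable x hR (P.cont.pow 3)) fun y => ?_
      refine mul_le_mul_of_nonneg_left ?_ (mker_nonneg _ _ _)
      refine pow_le_pow_left₀ (le_max_right _ _) (max_le (by linarith) (P.nonneg y)) 3
  have hlim : Tendsto (fun ε : ℝ => max (g x - ε) 0 ^ 3 * (R ^ n * wtot n)) (𝓝[>] 0)
      (𝓝 (g x ^ 3 * (R ^ n * wtot n))) := by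
    have hc : Continuous fun ε : ℝ => max (g x - ε) 0 ^ 3 * (R ^ n * wtot n) := by fun_prop
    have := (hc.tendsto 0).mono_left (nhdsWithin_le_nhds (s := Ioi 0))
    simpa [max_eq_left (P.nonneg x)] using this
  exact le_of_tendsto hlim (eventually_nhdsWithin_of_forall fun ε hε => key ε hε)

theorem Prof.harnack {n : ℕ} {U : Set (En n)} {g : En n → ℝ} (P : Prof U g) {x y : En n} {s : ℝ}
    (hs : 0 < s) (hx : closedBall x (8 * s) ⊆ U) (hy : dist y x ≤ s) :
    g y ≤ 2 * 4 ^ n * g x := by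
  have h1 := P.mean_value hs (x := y) (fun z hz => hx (by
    rw [mem_closedBall] at hz ⊢
    linarith [dist_triangle z y x]))
  have h2 := P.mean_value (R := 4 * s) (by linarith) (x := x) (by
    convert hx using 2; ring)
  have h3 : ∫ z, mker y s z * g z ≤ ∫ z, 2 * (mker x (4 * s) z * g z) := by
    refine integral_mono (mker_mul_integrable y hs P.cont)
      ((mker_mul_integrable x (by linarith) P.cont).const_mul 2) fun z => ?_
    simp only
    rw [← mul_assoc]
    refine mul_le_mul_of_nonneg_right ?_ (P.nonneg z)
    rcases le_or_gt s (dist z y) with hz | hz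
    · rw [mker_zero hs hz]
      have := mker_nonneg x (4 * s) z
      linarith
    · have e1 : mker y s z ≤ 1 := wgt_le_one _
      have e2 : 1/2 ≤ mker x (4 * s) z := by
        refine wgt_lower' ?_
        rw [mker_norm _ _ (by linarith), div_le_iff₀ (by linarith)]
        linarith [dist_triangle z y x]
      linarith
  rw [integral_const_mul, ← h1, ← h2, mul_pow] at h3
  have hw := wtot_pos n
  have hsn : 0 < s ^ n * wtot n := by positivity
  refine le_of_mul_le_mul_right ?_ hsn
  linarith

/-! ### Harnack chains in uniform domains -/

theorem ball_subset_of_infDist {n : ℕ} {U : Set (En n)} (hU : IsOpen U) {x : En n} (hx : x ∈ U)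
    {d : ℝ} (hd0 : 0 < d) (hd : d ≤ infDist x (frontier U)) : ball x d ⊆ U := by
  refine IsPreconnected.subset_left_of_subset_union (v := (closure U)ᶜ) hU
    isClosed_closure.isOpen_compl ?_ ?_ ⟨x, mem_ball_self hd0, hx⟩
    (convex_ball x d).isPreconnected
  · exact disjoint_compl_right.mono_left subset_closure |>.symm.symm
  · intro y hy
    by_cases hyU : y ∈ U
    · exact Or.inl hyU
    · refine Or.inr fun hyc => ?_
      have hyf : y ∈ frontier U := by rw [hU.frontier_eq]; exact ⟨hyc, hyU⟩
      have := infDist_le_dist_of_mem (x := x) hyf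
      rw [mem_ball, dist_comm] at hy
      linarith

theorem Prof.chain {n : ℕ} {U : Set (En n)} {g : En n → ℝ} (P : Prof U g) {ρ : ℝ} (hρ : 0 < ρ)
    (γ : ℝ → En n) (b : ℝ) (N : ℕ) : ∀ a : ℝ, a ≤ b → ContinuousOn γ (Icc a b) →
    (∀ t ∈ Icc a b, closedBall (γ t) (8 * ρ) ⊆ U) →
    eVariationOn γ (Icc a b) ≤ ENNReal.ofReal (N * ρ) →
    g (γ a) ≤ (2 * 4 ^ n) ^ (N + 1) * g (γ b) := by
  have hH : (1:ℝ) ≤ 2 * 4 ^ n := by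
    have : (1:ℝ) ≤ 4 ^ n := one_le_pow₀ (by norm_num)
    linarith
  induction N with
  | zero =>
    intro a hab _ hb hv
    have h0 : eVariationOn γ (Icc a b) = 0 := by simpa using hv
    have h1 := eVariationOn.edist_le γ (left_mem_Icc.2 hab) (right_mem_Icc.2 hab)
    rw [h0] at h1
    have h2 : γ a = γ b := edist_le_zero.1 h1
    have h3 : γ b ∈ U := hb b (right_mem_Icc.2 hab) (mem_closedBall_self (by linarith))
    have h4 := P.pos _ h3
    rw [h2]; simp only [zero_add, pow_one]; nlinarith
  | succ N ih =>
    intro a hab hc hb hv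
    have hbU : γ b ∈ U := hb b (right_mem_Icc.2 hab) (mem_closedBall_self (by linarith))
    have hbp := P.pos _ hbU
    by_cases hfar : dist (γ a) (γ b) ≤ ρ
    · have h1 := P.harnack hρ (hb b (right_mem_Icc.2 hab)) hfar
      refine h1.trans (mul_le_mul_of_nonneg_right ?_ hbp.le)
      exact le_self_pow₀ hH (by omega)
    · push Not at hfar
      have hcd : ContinuousOn (fun t => dist (γ a) (γ t)) (Icc a b) :=
        (continuous_const.dist continuous_id).comp_continuousOn hc
      obtain ⟨u, hu, hud⟩ := intermediate_value_Icc hab hcd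
        (show ρ ∈ Icc _ _ from ⟨by simp [hρ.le], hfar.le⟩)
      simp only at hud
      have h1 := P.harnack hρ (hb u hu) hud.le
      have hsub : Icc u b ⊆ Icc a b := Icc_subset_Icc_left hu.1
      have hsplit := eVariationOn.Icc_add_Icc γ (s := univ) hu.1 hu.2 (mem_univ u)
      simp only [univ_inter] at hsplit
      have hlow : ENNReal.ofReal ρ ≤ eVariationOn γ (Icc a u) := by
        rw [← hud, ← edist_dist]
        exact eVariationOn.edist_le γ (left_mem_Icc.2 hu.1) (right_mem_Icc.2 hu.1)
      have hv2 : eVariationOn γ (Icc u b) ≤ ENNReal.ofReal (N * ρ) := by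
        rw [← hsplit] at hv
        have e : ENNReal.ofReal ((N + 1 : ℕ) * ρ) = ENNReal.ofReal ρ + ENNReal.ofReal (N * ρ) := by
          rw [← ENNReal.ofReal_add hρ.le (by positivity)]; push_cast; ring_nf
        rw [e] at hv
        have : ENNReal.ofReal ρ + eVariationOn γ (Icc u b) ≤
            ENNReal.ofReal ρ + ENNReal.ofReal (N * ρ) := (add_le_add_left hlow _).trans hv
        exact (ENNReal.add_le_add_iff_left ENNReal.ofReal_ne_top).1 this
      have h2 := ih u hu.2 (hc.mono hsub) (fun t ht => hb t (hsub ht)) hv2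
      calc g (γ a) ≤ 2 * 4 ^ n * g (γ u) := h1
        _ ≤ 2 * 4 ^ n * ((2 * 4 ^ n) ^ (N + 1) * g (γ b)) := by gcongr
        _ = (2 * 4 ^ n) ^ (N + 1 + 1) * g (γ b) := by ring

theorem infDist_le_add {n : ℕ} {S : Set (En n)} (x y : En n) :
    infDist x S - dist x y ≤ infDist y S := by
  have := infDist_le_infDist_add_dist (s := S) (x := x) (y := y)
  linarith

/-- bounded Harnack chains -/
theorem exists_chain_const (n : ℕ) {c C : ℝ} (hc : c ∈ Ioo (0:ℝ) 1) (hC : 1 < C) (K : ℝ) :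
    ∃ A : ℝ, 1 ≤ A ∧ ∀ (U : Set (En n)) (g : En n → ℝ), IsUniformDomain c C U → Prof U g →
      ∀ y ∈ U, ∀ z ∈ U, ∀ d : ℝ, 0 < d → d ≤ infDist y (frontier U) → d ≤ infDist z (frontier U) →
        dist y z ≤ K * d → g y ≤ A * g z := by
  obtain ⟨N, hN⟩ := exists_nat_ge (32 * C * K / c)
  have hH : (1:ℝ) ≤ 2 * 4 ^ n := by
    have : (1:ℝ) ≤ 4 ^ n := one_le_pow₀ (by norm_num)
    linarith
  refine ⟨(2 * 4 ^ n) ^ (N + 1), one_le_pow₀ hH, ?_⟩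
  intro U g hU P y hy z hz d hd hdy hdz hyz
  obtain ⟨γ, ⟨hγc, hγm, h0, h1⟩, hlen, hδ⟩ := hU.2.2 y hy z hz
  have hc0 := hc.1
  have hc1 := hc.2
  have key := P.chain (ρ := c * d / 32) (by positivity) γ 1 N 0 zero_le_one hγc ?_ ?_
  · rw [h0, h1] at key; exact key
  · intro t ht
    have hd2 : c * d / 2 ≤ infDist (γ t) (frontier U) := by
      rcases le_or_gt (d / 2) (min (dist y (γ t)) (dist (γ t) z)) with hm | hm
      · have := hδ t ht
        nlinarith
      · rcases min_lt_iff.1 hm with h | h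
        · have := infDist_le_add (S := frontier U) y (γ t)
          nlinarith
        · have := infDist_le_add (S := frontier U) z (γ t)
          rw [dist_comm] at h
          nlinarith
    refine Subset.trans ?_ (ball_subset_of_infDist P.op (hγm ht) (by positivity) hd2)
    refine closedBall_subset_ball ?_
    have : 0 < c * d := by positivity
    linarith
  · refine hlen.trans (ENNReal.ofReal_le_ofReal ?_)
    have h2 : C * dist y z ≤ C * (K * d) := by gcongr
    have h3 : (32 * C * K / c) * (c * d / 32) ≤ N * (c * d / 32) := by gcongr
    have h4 : (32 * C * K / c) * (c * d / 32) = C * (K * d) := by field_simp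
    linarith

theorem exists_far_point {n : ℕ} {c C : ℝ} {U : Set (En n)}
    (hU : IsUniformDomain c C U) (hub : ¬ Bornology.IsBounded U) {y : En n} (hy : y ∈ U) {R : ℝ}
    (hR : 0 < R) (hc : 0 < c) : ∃ z ∈ U, dist y z = R ∧ c * R ≤ infDist z (frontier U) := by
  obtain ⟨p, hp, hpd⟩ : ∃ p ∈ U, 2 * R < dist y p := by
    by_contra! h
    refine hub ((isBounded_closedBall (x := y) (r := 2 * R)).subset fun p hp => ?_)
    rw [mem_closedBall, dist_comm]
    exact h p hp
  obtain ⟨γ, ⟨hγc, hγm, h0, h1⟩, -, hδ⟩ := hU.2.2 y hy p hp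
  have hcd : ContinuousOn (fun t => dist y (γ t)) (Icc 0 1) := (continuous_const.dist continuous_id).comp_continuousOn hγc
  obtain ⟨u, hu, hud⟩ := intermediate_value_Icc zero_le_one hcd
    (show R ∈ Icc _ _ from ⟨by simp [h0, hR.le], by simp only [h1]; linarith⟩)
  simp only at hud
  refine ⟨γ u, hγm hu, hud, ?_⟩
  refine le_trans ?_ (hδ u hu)
  refine mul_le_mul_of_nonneg_left (le_min hud.ge ?_) hc.le
  linarith [dist_triangle y (γ u) p]

theorem exists_interior_const (n : ℕ) {c C : ℝ} (hc : c ∈ Ioo (0:ℝ) 1) (hC : 1 < C) :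
    ∃ A A' : ℝ, 2 ≤ A ∧ 1 ≤ A' ∧ ∀ (U : Set (En n)) (g : En n → ℝ), IsUniformDomain c C U →
      ¬ Bornology.IsBounded U → Prof U g →
      ∀ y ∈ U, ∀ z ∈ U, ∀ r : ℝ, 0 < r → ∀ N : ℕ, r / 2 ^ N ≤ infDist y (frontier U) →
        c * r / 8 ≤ infDist z (frontier U) → dist y z ≤ 4 * r → g y ≤ A' * A ^ N * g z := by
  have hc0 := hc.1
  have hc1 := hc.2
  obtain ⟨A0, hA01, hA0⟩ := exists_chain_const n hc hC (3 / c)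
  obtain ⟨A', hA'1, hA'⟩ := exists_chain_const n hc hC (40 / c)
  refine ⟨max A0 2, A', le_max_right _ _, hA'1, ?_⟩
  intro U g hU hub P y hy z hz r hr N hyN hzr hyz
  set A := max A0 2
  have hA1 : 0 < A := by positivity
  set R := r / 2 ^ N with hRdef
  have hR : 0 < R := by positivity
  have grow : ∀ k : ℕ, ∃ p ∈ U, dist y p ≤ 2 ^ k * R ∧ c * (2 ^ k * R) ≤ infDist p (frontier U) ∧
      g y ≤ A ^ k * g p := by
    intro k
    induction k with
    | zero =>
      refine ⟨y, hy, by simp [hR.le], ?_, by simp⟩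
      simp only [pow_zero, one_mul]
      nlinarith
    | succ k ih =>
      obtain ⟨p, hp, hpd, hpδ, hpg⟩ := ih
      obtain ⟨q, hq, hqd, hqδ⟩ := exists_far_point hU hub hy (R := 2 ^ (k+1) * R) (by positivity) hc0
      refine ⟨q, hq, hqd.le, hqδ, ?_⟩
      have hkR : 0 < 2 ^ k * R := by positivity
      have h1 := hA0 U g hU P p hp q hq (c * (2 ^ k * R)) (by positivity) hpδ
        (le_trans (by rw [pow_succ]; nlinarith) hqδ) (by
          have e : 3 / c * (c * (2 ^ k * R)) = 3 * (2 ^ k * R) := by field_simp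
          rw [e]
          have := dist_triangle p y q
          rw [dist_comm p y] at this
          rw [pow_succ] at hqd
          linarith)
      have hqp := P.pos q hq
      calc g y ≤ A ^ k * g p := hpg
        _ ≤ A ^ k * (A * g q) := by
          refine mul_le_mul_of_nonneg_left (h1.trans ?_) (by positivity)
          exact mul_le_mul_of_nonneg_right (le_max_left _ _) hqp.le
        _ = A ^ (k+1) * g q := by ring
  obtain ⟨p, hp, hpd, hpδ, hpg⟩ := grow N
  have e : 2 ^ N * R = r := by rw [hRdef]; field_simp
  rw [e] at hpd hpδ
  have h2 := hA' U g hU P p hp z hz (c * r / 8) (by positivity) (by nlinarith) hzr (by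
    have e : 40 / c * (c * r / 8) = 5 * r := by field_simp; norm_num
    rw [e]
    have := dist_triangle p y z
    rw [dist_comm p y] at this
    linarith)
  calc g y ≤ A ^ N * g p := hpg
    _ ≤ A ^ N * (A' * g z) := by gcongr
    _ = A' * A ^ N * g z := by ring

/-! ### Carleson estimate via the Domar argument -/

theorem exists_domar_const (n : ℕ) {c : ℝ} (hc : c ∈ Ioo (0:ℝ) 1) :
    ∃ b : ℝ, 1 < b ∧ ∀ (U : Set (En n)) (g : En n → ℝ), Prof U g →
      ∀ x ∈ U, ∀ R : ℝ, 0 < R → ∀ z : En n, dist x z = R / 2 →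
        (∀ p ∈ ball z (c * R / 4), g p ≤ g x / 2) →
        ∃ x' ∈ U, dist x x' ≤ R ∧ b * g x ^ 3 ≤ g x' ^ 3 := by
  have hc0 := hc.1
  have hc1 := hc.2
  have hV : 0 < (volume : Measure (En n)).real (ball 0 1) := by
    rw [measureReal_def]
    exact ENNReal.toReal_pos (measure_ball_pos volume _ one_pos).ne' measure_ball_lt_top.ne
  set V := (volume : Measure (En n)).real (ball 0 1) with hVdef
  have hW := wtot_pos n
  refine ⟨1 + (c / 4) ^ n * V / wtot n / 64, by
    have : 0 < (c / 4) ^ n * V / wtot n / 64 := by positivity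
    linarith, ?_⟩
  set b := 1 + (c / 4) ^ n * V / wtot n / 64 with hb
  have hb1 : 1 ≤ b := by
    have : 0 < (c / 4) ^ n * V / wtot n / 64 := by positivity
    linarith
  intro U g P x hx R hR z hz hhole
  by_contra! hcon
  have ht := P.pos x hx
  have ht3 : 0 < g x ^ 3 := by positivity
  have hle : ∀ p, dist x p ≤ R → g p ^ 3 ≤ b * g x ^ 3 := by
    intro p hp
    by_cases hpU : p ∈ U
    · exact (hcon p hpU hp).le
    · rw [P.zero p hpU]
      have : 0 < b * g x ^ 3 := by positivity
      simpa using this.le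
  set S := ball z (c * R / 4) with hS
  have hSi : Integrable (S.indicator fun _ : En n => 7 / 64 * g x ^ 3) := by
    rw [integrable_indicator_iff measurableSet_ball]
    exact integrableOn_const (measure_ball_lt_top.ne)
  have h1 := P.sub_mean x hR
  have h2 : ∫ y, mker x R y * g y ^ 3 ≤ ∫ y, (mker x R y * (b * g x ^ 3) -
      S.indicator (fun _ : En n => 7 / 64 * g x ^ 3) y) := by
    refine integral_mono (mker_mul_integrable x hR (P.cont.pow 3))
      (((mker_integrable x hR).mul_const _).sub hSi) fun p => ?_
    simp only
    by_cases hp : p ∈ S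
    · rw [indicator_of_mem hp]
      have hpx : dist p x ≤ 3 / 4 * R := by
        rw [hS, mem_ball] at hp
        have := dist_triangle p z x
        rw [dist_comm z x] at this
        nlinarith
      have hk : 1/8 ≤ mker x R p := by
        refine wgt_lower ?_
        rw [mker_norm _ _ hR, div_le_iff₀ hR]
        exact hpx
      have hg : g p ^ 3 ≤ (g x / 2) ^ 3 := pow_le_pow_left₀ (P.nonneg p) (hhole p hp) 3
      have e : (g x / 2) ^ 3 = g x ^ 3 / 8 := by ring
      rw [e] at hg
      have h3 : mker x R p * g p ^ 3 ≤ mker x R p * (g x ^ 3 / 8) := by gcongr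
      have h4 : mker x R p * (g x ^ 3) ≤ mker x R p * (b * g x ^ 3) := by
        refine mul_le_mul_of_nonneg_left ?_ (mker_nonneg _ _ _)
        nlinarith
      have h5 : 1/8 * g x ^ 3 ≤ mker x R p * g x ^ 3 := by gcongr
      linarith
    · rw [indicator_of_notMem hp, sub_zero]
      rcases le_or_gt R (dist p x) with h | h
      · rw [mker_zero hR h]; simp
      · refine mul_le_mul_of_nonneg_left (hle p (by rw [dist_comm]; exact h.le)) (mker_nonneg _ _ _)
  have hvol : (volume : Measure (En n)).real S = (c * R / 4) ^ n * V := by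
    rw [hS, measureReal_def, Measure.addHaar_ball_of_pos _ _ (by positivity), ENNReal.toReal_mul,
      ENNReal.toReal_ofReal (by positivity), finrank_euclideanSpace_fin, hVdef, measureReal_def]
  rw [integral_sub ((mker_integrable x hR).mul_const _) hSi, integral_mul_const, mker_total x hR,
    integral_indicator_const _ measurableSet_ball, hvol, smul_eq_mul] at h2
  have e1 : (c * R / 4) ^ n = (c / 4) ^ n * R ^ n := by rw [← mul_pow]; ring_nf
  rw [e1] at h2
  have hRn : 0 < R ^ n := by positivity
  have e2 : (b - 1) * wtot n = (c / 4) ^ n * V / 64 := by rw [hb]; field_simp; ring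
  have h3 := h1.trans h2
  have hω : 0 < (c / 4) ^ n * V := by positivity
  have h4 : 0 ≤ (R ^ n * g x ^ 3) * ((b - 1) * wtot n - (c/4)^n * V * (7 / 64)) := by linarith
  rw [e2] at h4
  have h5 := nonneg_of_mul_nonneg_right h4 (by positivity)
  linarith

theorem exists_carleson_const (n : ℕ) {c C : ℝ} (hc : c ∈ Ioo (0:ℝ) 1) (hC : 1 < C) :
    ∃ K : ℝ, 1 ≤ K ∧ ∀ (U : Set (En n)) (g : En n → ℝ), IsUniformDomain c C U →
      ¬ Bornology.IsBounded U → Prof U g →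
      ∀ y ∈ U, ∀ z ∈ U, ∀ r : ℝ, 0 < r →
        c * r / 8 ≤ infDist z (frontier U) → dist y z ≤ 2 * r → g y ≤ K * g z := by
  have hc0 := hc.1
  have hc1 := hc.2
  obtain ⟨A, A', hA2, hA'1, hint⟩ := exists_interior_const n hc hC
  obtain ⟨b, hb1, hdom⟩ := exists_domar_const n hc
  obtain ⟨m, hm⟩ := pow_unbounded_of_one_lt (A ^ 3) hb1
  obtain ⟨N0, hN0⟩ := pow_unbounded_of_one_lt (8 * m / c) (by norm_num : (1:ℝ) < 2)
  have hA1 : 1 ≤ A := by linarith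
  refine ⟨2 * A' * A ^ N0, by nlinarith [one_le_pow₀ hA1 (n := N0)], ?_⟩
  intro U g hU hub P y hy z hz r hr hzr hyz
  have hM := P.pos z hz
  -- one Domar step
  have step : ∀ (N : ℕ) (x : En n), x ∈ U → 2 * A' * A ^ N * g z ≤ g x →
      dist x z + 4 / c * (r / 2 ^ N) ≤ 4 * r →
      ∃ x' ∈ U, dist x x' ≤ 4 / c * (r / 2 ^ N) ∧ b * g x ^ 3 ≤ g x' ^ 3 := by
    intro N x hx hgx hdx
    have hR : 0 < 4 / c * (r / 2 ^ N) := by positivity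
    set R := 4 / c * (r / 2 ^ N) with hRd
    have hcR : c * R / 4 = r / 2 ^ N := by rw [hRd]; field_simp
    obtain ⟨p, hp, hpd, hpδ⟩ := exists_far_point hU hub hx (R := R / 2) (by positivity) hc0
    refine hdom U g P x hx R hR p hpd fun q hq => ?_
    have hcR0 : 0 < c * R := by positivity
    have hqU : q ∈ U := by
      refine ball_subset_of_infDist P.op hp (by positivity) (le_trans ?_ hpδ) hq
      linarith
    rw [mem_ball, dist_comm] at hq
    have h1 := infDist_le_add (S := frontier U) p q
    have h2 := hint U g hU hub P q hqU z hz r hr N (by rw [← hcR]; linarith) hzr (by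
      have := dist_triangle q x z
      have h3 := dist_triangle x p q
      rw [dist_comm q x] at this
      nlinarith)
    linarith
  -- m Domar steps
  have block : ∀ (N : ℕ) (x : En n), x ∈ U → 2 * A' * A ^ N * g z ≤ g x →
      dist x z + m * (4 / c * (r / 2 ^ N)) ≤ 4 * r →
      ∃ x' ∈ U, dist x x' ≤ m * (4 / c * (r / 2 ^ N)) ∧ 2 * A' * A ^ (N + 1) * g z ≤ g x' := by
    intro N x hx hgx hdx
    have hR : 0 < 4 / c * (r / 2 ^ N) := by positivity
    set R := 4 / c * (r / 2 ^ N) with hRd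
    have hgx0 := P.pos x hx
    have sub : ∀ j : ℕ, j ≤ m → ∃ x' ∈ U, dist x x' ≤ j * R ∧ b ^ j * g x ^ 3 ≤ g x' ^ 3 := by
      intro j
      induction j with
      | zero => intro _; exact ⟨x, hx, by simp, by simp⟩
      | succ j ih =>
        intro hj
        obtain ⟨x', hx', hd, hg⟩ := ih (by omega)
        have hjm : ((j:ℝ) + 1) * R ≤ m * R := by
          gcongr
          exact_mod_cast hj
        have hxx : g x ≤ g x' := by
          refine le_of_pow_le_pow_left₀ (n := 3) (by norm_num) (P.nonneg _) (le_trans ?_ hg)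
          have : 1 ≤ b ^ j := one_le_pow₀ hb1.le
          have h3 : 0 < g x ^ 3 := by positivity
          nlinarith
        obtain ⟨x'', hx'', hd', hg'⟩ := step N x' hx' (hgx.trans hxx) (by
          have := dist_triangle x' x z
          rw [dist_comm x' x] at this
          nlinarith)
        refine ⟨x'', hx'', ?_, ?_⟩
        · push_cast
          have := dist_triangle x x' x''
          nlinarith
        · calc b ^ (j + 1) * g x ^ 3 = b * (b ^ j * g x ^ 3) := by ring
            _ ≤ b * g x' ^ 3 := by gcongr
            _ ≤ g x'' ^ 3 := hg'
    obtain ⟨x', hx', hd, hg⟩ := sub m le_rfl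
    refine ⟨x', hx', hd, ?_⟩
    have h3 : A * g x ≤ g x' := by
      refine le_of_pow_le_pow_left₀ (n := 3) (by norm_num) (P.nonneg _) (le_trans ?_ hg)
      rw [mul_pow]
      gcongr
    calc 2 * A' * A ^ (N + 1) * g z = A * (2 * A' * A ^ N * g z) := by ring
      _ ≤ A * g x := by gcongr
      _ ≤ g x' := h3
  by_contra! hcon
  have seq : ∀ k : ℕ, ∃ x ∈ U, dist y x ≤ r * (1 - 1 / 2 ^ k) ∧ 2 * A' * A ^ (N0 + k) * g z ≤ g x := by
    intro k
    induction k with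
    | zero => exact ⟨y, hy, by simp, hcon.le⟩
    | succ k ih =>
      obtain ⟨x, hx, hd, hg⟩ := ih
      have hstep : m * (4 / c * (r / 2 ^ (N0 + k))) ≤ r * (1 / 2 ^ k) / 2 := by
        have e : m * (4 / c * (r / 2 ^ (N0 + k))) = (8 * m / c) * (r * (1 / 2 ^ k) / 2) / 2 ^ N0 := by
          rw [pow_add]; field_simp; ring
        rw [e, div_le_iff₀ (by positivity), mul_comm]
        gcongr
      have hk0 : 0 < r * (1 / 2 ^ k) := by positivity
      have hk1 : r * (1 / 2 ^ k) ≤ r := by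
        have : (1:ℝ) / 2 ^ k ≤ 1 := by
          rw [div_le_one (by positivity)]; exact one_le_pow₀ (by norm_num)
        nlinarith
      obtain ⟨x', hx', hd', hg'⟩ := block (N0 + k) x hx hg (by
        have := dist_triangle x y z
        rw [dist_comm x y] at this
        nlinarith)
      refine ⟨x', hx', ?_, hg'⟩
      have := dist_triangle y x x'
      have e : r * (1 - 1 / 2 ^ (k + 1)) = r - r * (1 / 2 ^ k) / 2 := by rw [pow_succ]; field_simp
      rw [e]
      nlinarith
  obtain ⟨B, hB⟩ := (isCompact_closedBall y r).exists_bound_of_continuousOn P.cont.continuousOn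
  obtain ⟨k, hk⟩ := pow_unbounded_of_one_lt (B / g z) (by linarith : (1:ℝ) < A)
  obtain ⟨x, hx, hd, hg⟩ := seq k
  have h1 := hB x (by
    rw [mem_closedBall, dist_comm]
    refine hd.trans ?_
    have : 0 < r * (1 / 2 ^ k) := by positivity
    linarith)
  rw [Real.norm_of_nonneg (P.nonneg x)] at h1
  rw [div_lt_iff₀ hM] at hk
  have h2 : A ^ k * g z ≤ 2 * A' * A ^ (N0 + k) * g z := by
    refine mul_le_mul_of_nonneg_right ?_ hM.le
    rw [pow_add]
    have e1 : 1 ≤ A ^ N0 := one_le_pow₀ hA1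
    have e2 : 0 < A ^ k := by positivity
    have e3 : 1 ≤ 2 * A' * A ^ N0 := by nlinarith
    nlinarith
  linarith

/-! ### The inner metric -/

theorem exists_concat {X : Type*} [PseudoEMetricSpace X] {Ω : Set X} {x y z : X} {γ₁ γ₂ : ℝ → X}
    (h₁ : IsCurveIn Ω x y γ₁) (h₂ : IsCurveIn Ω y z γ₂) :
    ∃ γ, IsCurveIn Ω x z γ ∧ curveLength γ ≤ curveLength γ₁ + curveLength γ₂ := by
  obtain ⟨c1, m1, a1, b1⟩ := h₁
  obtain ⟨c2, m2, a2, b2⟩ := h₂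
  set γ : ℝ → X := fun t => if t ≤ 1 / 2 then γ₁ (2 * t) else γ₂ (2 * t - 1) with hγ
  have e1 : EqOn γ (γ₁ ∘ fun t => 2 * t) (Icc 0 (1/2)) := by
    intro t ht
    simp only [hγ, Function.comp]; rw [if_pos ht.2]
  have e2 : EqOn γ (γ₂ ∘ fun t => 2 * t - 1) (Icc (1/2) 1) := by
    intro t ht
    rcases eq_or_lt_of_le ht.1 with h | h
    · subst h
      simp only [hγ, le_refl, if_true, Function.comp]
      norm_num [b1, a2]
    · simp only [hγ, Function.comp]; rw [if_neg (not_le.2 h)]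
  have t1 : MapsTo (fun t : ℝ => 2 * t) (Icc 0 (1/2)) (Icc 0 1) := fun t ht =>
    ⟨by linarith [ht.1], by linarith [ht.2]⟩
  have t2 : MapsTo (fun t : ℝ => 2 * t - 1) (Icc (1/2) 1) (Icc 0 1) := fun t ht =>
    ⟨by linarith [ht.1], by linarith [ht.2]⟩
  have hun : Icc (0:ℝ) 1 = Icc 0 (1/2) ∪ Icc (1/2) 1 := by
    rw [Icc_union_Icc_eq_Icc] <;> norm_num
  refine ⟨γ, ⟨?_, ?_, ?_, ?_⟩, ?_⟩
  · rw [hun]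
    refine ContinuousOn.union_of_isClosed ?_ ?_ isClosed_Icc isClosed_Icc
    · exact (c1.comp (by fun_prop) t1).congr e1
    · exact (c2.comp (by fun_prop) t2).congr e2
  · rw [hun]
    intro t ht
    rcases ht with ht | ht
    · rw [e1 ht]; exact m1 (t1 ht)
    · rw [e2 ht]; exact m2 (t2 ht)
  · rw [e1 ⟨le_rfl, by norm_num⟩]; simp [a1]
  · rw [e2 ⟨by norm_num, le_rfl⟩]; norm_num [b2]
  · unfold curveLength
    have hsplit := eVariationOn.Icc_add_Icc γ (s := univ) (a := (0:ℝ)) (b := 1/2) (c := 1)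
      (by norm_num) (by norm_num) (mem_univ _)
    simp only [univ_inter] at hsplit
    rw [← hsplit, eVariationOn.congr e1, eVariationOn.congr e2]
    refine add_le_add ?_ ?_
    · exact eVariationOn.comp_le_of_monotoneOn _ _ (fun s _ t _ h => by show _ ≤ _; linarith) t1
    · exact eVariationOn.comp_le_of_monotoneOn _ _ (fun s _ t _ h => by show _ ≤ _; linarith) t2

theorem innerDist_le_add {n : ℕ} {U : Set (En n)} {x y z : En n} (hs : segment ℝ y z ⊆ U) :
    innerDist U x z ≤ innerDist U x y + edist y z := by
  have hseg : IsCurveIn U y z (AffineMap.lineMap y z : ℝ → En n) := by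
    refine ⟨AffineMap.lineMap_continuous.continuousOn, ?_, by simp, by simp⟩
    intro t ht
    apply hs
    rw [segment_eq_image_lineMap]
    exact ⟨t, ht, rfl⟩
  have hlen : curveLength (AffineMap.lineMap y z : ℝ → En n) ≤ edist y z := by
    unfold curveLength
    have h1 : LipschitzWith (nndist y z) (AffineMap.lineMap y z : ℝ → En n) := lipschitzWith_lineMap y z
    have h2 := (h1.lipschitzOnWith (s := univ)).comp_eVariationOn_le (g := id) (s := Icc (0:ℝ) 1)
      (fun _ _ => mem_univ _)
    have h3 := (monotoneOn_id (s := Icc (0:ℝ) 1)).eVariationOn_le (left_mem_Icc.2 zero_le_one)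
      (right_mem_Icc.2 zero_le_one)
    simp only [inter_self, id, sub_zero, ENNReal.ofReal_one] at h3
    simp only [Function.comp_id] at h2
    refine h2.trans ?_
    rw [edist_nndist]
    calc _ ≤ (nndist y z : ℝ≥0∞) * 1 := by gcongr
      _ = _ := mul_one _
  unfold innerDist
  rw [ENNReal.iInf_add]
  refine le_iInf fun γ => ?_
  by_cases hγ : IsCurveIn U x y γ
  · simp only [hγ, iInf_pos]
    obtain ⟨γ', h1, h2⟩ := exists_concat hγ hseg
    exact (iInf₂_le γ' h1).trans (h2.trans (by gcongr))
  · simp [hγ]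

theorem edist_le_innerDist {n : ℕ} {U : Set (En n)} (x y : En n) : edist x y ≤ innerDist U x y := by
  unfold innerDist
  refine le_iInf₂ fun γ hγ => ?_
  obtain ⟨-, -, a, b⟩ := hγ
  rw [← a, ← b]
  exact eVariationOn.edist_le γ (left_mem_Icc.2 zero_le_one) (right_mem_Icc.2 zero_le_one)

theorem innerBall_isOpen {n : ℕ} {U : Set (En n)} (hU : IsOpen U) (x : En n) (r : ℝ) :
    IsOpen {y | y ∈ U ∧ innerDist U x y < ENNReal.ofReal r} := by
  rw [Metric.isOpen_iff]
  rintro y ⟨hy, hyr⟩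
  obtain ⟨ε, hε, hεU⟩ := Metric.isOpen_iff.1 hU y hy
  obtain ⟨δ, hδ, hδr⟩ : ∃ δ : ℝ, 0 < δ ∧ innerDist U x y + ENNReal.ofReal δ ≤ ENNReal.ofReal r := by
    have h1 : innerDist U x y ≠ ∞ := (hyr.trans ENNReal.ofReal_lt_top).ne
    refine ⟨r - (innerDist U x y).toReal, ?_, ?_⟩
    · have := (ENNReal.lt_ofReal_iff_toReal_lt h1).1 hyr
      linarith
    · have := (ENNReal.lt_ofReal_iff_toReal_lt h1).1 hyr
      rw [ENNReal.ofReal_sub _ ENNReal.toReal_nonneg, ENNReal.ofReal_toReal h1, add_tsub_cancel_of_le hyr.le]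
  refine ⟨min ε δ, lt_min hε hδ, fun z hz => ?_⟩
  have hzε : z ∈ ball y ε := ball_subset_ball (min_le_left _ _) hz
  have hzδ : dist y z < δ := by
    rw [dist_comm]; exact lt_of_lt_of_le hz (min_le_right _ _)
  refine ⟨hεU hzε, ?_⟩
  have h1 := innerDist_le_add (x := x) (((convex_ball y ε).segment_subset (mem_ball_self hε) hzε).trans hεU)
  refine h1.trans_lt (lt_of_lt_of_le ?_ hδr)
  refine ENNReal.add_lt_add_left (hyr.trans ENNReal.ofReal_lt_top).ne ?_
  rw [edist_dist]
  exact (ENNReal.ofReal_lt_ofReal_iff hδ).2 hzδ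

theorem prof_of_profile {n : ℕ} {U : Set (En n)} (hU : IsOpen U) {h : En n → ℝ}
    (hc : ContinuousOn h (closure U)) (hp : ∀ z ∈ U, 0 < h z) (hh : IsHarmonicOn h U)
    (hz : ∀ z ∈ frontier U, h z = 0) : Prof U (U.indicator h) := by
  refine ⟨hU, ?_, ?_, ?_, ?_, ?_⟩
  · exact continuous_indicator hz hc
  · intro z hzU; rw [indicator_of_mem hzU]; exact hp z hzU
  · intro z hzU; exact indicator_of_notMem hzU h
  · exact hh.1.congr fun z hzU => indicator_of_mem hzU h
  · intro z hzU
    rw [← hh.2 z hzU]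
    refine lap_congr ?_
    filter_upwards [hU.mem_nhds hzU] with y hy
    exact indicator_of_mem hy h


theorem statement4 (n : ℕ) (hn : 1 ≤ n) (cu Cu : ℝ)
    (hcu : cu ∈ Set.Ioo (0:ℝ) 1) (hCu : 1 < Cu) :
    ∃ A : ℝ, 1 ≤ A ∧
      ∀ U : Set (En n), U ≠ Set.univ → (frontier U).Nonempty →
        ¬ Bornology.IsBounded U → IsUniformDomain cu Cu U →
        ∀ h : En n → ℝ, ContinuousOn h (closure U) → (∀ z ∈ U, 0 < h z) →
          IsHarmonicOn h U → (∀ z ∈ frontier U, h z = 0) →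
          ∀ x ∈ U, ∀ r : ℝ, 0 < r →
            ∀ xr ∈ U, innerDist U x xr ≤ ENNReal.ofReal (r / 4) →
              cu * r / 8 ≤ Metric.infDist xr (frontier U) →
              A⁻¹ * (h xr)^2 * r^n ≤
                  (∫ y in {y | y ∈ U ∧ innerDist U x y < ENNReal.ofReal r}, (h y)^2) ∧
              (∫ y in {y | y ∈ U ∧ innerDist U x y < ENNReal.ofReal r}, (h y)^2) ≤
                  A * (h xr)^2 * r^n := by
  have hc0 := hcu.1
  have hc1 := hcu.2
  obtain ⟨K, hK1, hK⟩ := exists_carleson_const n hcu hCu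
  have hW := wtot_pos n
  set V := (volume : Measure (En n)).real (ball 0 1) with hVdef
  have hV : 0 ≤ V := measureReal_nonneg
  set w := (cu / 32) ^ n * wtot n with hw
  have hw0 : 0 < w := by positivity
  have hA1 : 1 ≤ 1 + K ^ 2 * V + w⁻¹ := by
    have : 0 ≤ K ^ 2 * V + w⁻¹ := by positivity
    linarith
  refine ⟨1 + K ^ 2 * V + w⁻¹, hA1, ?_⟩
  intro U _ _ hub hU h hcont hpos hharm hzero x hx r hr xr hxr hxxr hxrδ
  have P := prof_of_profile hU.1 hcont hpos hharm hzero
  set g := U.indicator h with hg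
  set S := {y | y ∈ U ∧ innerDist U x y < ENNReal.ofReal r} with hS
  have hSo : IsOpen S := innerBall_isOpen hU.1 x r
  have hSU : S ⊆ U := fun y hy => hy.1
  have hSb : S ⊆ ball x r := by
    intro y hy
    have h1 := (edist_le_innerDist x y).trans_lt hy.2
    rw [edist_dist] at h1
    rw [mem_ball, dist_comm]
    exact (ENNReal.ofReal_lt_ofReal_iff hr).1 h1
  have hint : ∫ y in S, (h y) ^ 2 = ∫ y in S, (g y) ^ 2 := by
    refine setIntegral_congr_fun hSo.measurableSet fun y hy => ?_
    simp only [hg, indicator_of_mem (hSU hy)]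
  have hgxr : h xr = g xr := by rw [hg, indicator_of_mem hxr]
  have hdx : dist x xr ≤ r / 4 := by
    have h1 := (edist_le_innerDist x xr).trans hxxr
    rw [edist_dist] at h1
    exact (ENNReal.ofReal_le_ofReal_iff (by positivity)).1 h1
  rw [hint, hgxr]
  have hM := P.pos xr hxr
  have hVS : (volume : Measure (En n)).real (ball x r) = r ^ n * V := by
    rw [measureReal_def, Measure.addHaar_ball_of_pos _ _ hr, ENNReal.toReal_mul,
      ENNReal.toReal_ofReal (by positivity), finrank_euclideanSpace_fin, hVdef, measureReal_def]
  have hSfin : volume S < ∞ := (measure_mono hSb).trans_lt measure_ball_lt_top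
  have hgint : IntegrableOn (fun y => g y ^ 2) S := by
    refine IntegrableOn.mono_set ?_ (hSb.trans ball_subset_closedBall)
    exact (P.cont.pow 2).continuousOn.integrableOn_compact (isCompact_closedBall x r)
  constructor
  · have hballU : ball xr (cu * r / 8) ⊆ U :=
      ball_subset_of_infDist hU.1 hxr (by positivity) hxrδ
    have hballS : ball xr (cu * r / 8) ⊆ S := by
      intro y hy
      refine ⟨hballU hy, ?_⟩
      have h1 := innerDist_le_add (x := x) (((convex_ball xr (cu * r / 8)).segment_subset
        (mem_ball_self (by positivity)) hy).trans hballU)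
      refine h1.trans_lt ?_
      rw [edist_dist]
      refine (add_le_add_left hxxr _).trans_lt ?_
      rw [← ENNReal.ofReal_add (by positivity) dist_nonneg]
      refine (ENNReal.ofReal_lt_ofReal_iff hr).2 ?_
      rw [mem_ball, dist_comm] at hy
      nlinarith
    have hs : 0 < cu * r / 32 := by positivity
    have mv := P.mean_value (x := xr) hs ((closedBall_subset_ball (by linarith)).trans hballU)
    have hI2 : Integrable fun y => mker xr (cu * r / 32) y * g y ^ 2 :=
      mker_mul_integrable xr hs (P.cont.pow 2)
    have e1 : ∫ y, 2 * g xr * (mker xr (cu * r / 32) y * g y) ≤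
        ∫ y, (mker xr (cu * r / 32) y * (g xr) ^ 2 + mker xr (cu * r / 32) y * g y ^ 2) := by
      refine integral_mono ((mker_mul_integrable xr hs P.cont).const_mul _)
        (((mker_integrable xr hs).mul_const _).add hI2) fun y => ?_
      simp only
      have := mul_nonneg (mker_nonneg xr (cu * r / 32) y) (sq_nonneg (g xr - g y))
      nlinarith
    rw [integral_const_mul, ← mv, integral_add ((mker_integrable xr hs).mul_const _) hI2,
      integral_mul_const, mker_total xr hs] at e1
    have e2 : ∫ y, mker xr (cu * r / 32) y * g y ^ 2 ≤ ∫ y in S, g y ^ 2 := by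
      rw [← integral_indicator hSo.measurableSet]
      refine integral_mono hI2 (hgint.integrable_indicator hSo.measurableSet) fun y => ?_
      simp only
      by_cases hy : y ∈ S
      · rw [indicator_of_mem hy]
        have : mker xr (cu * r / 32) y ≤ 1 := wgt_le_one _
        nlinarith [sq_nonneg (g y)]
      · rw [indicator_of_notMem hy, mker_zero hs, zero_mul]
        by_contra! hlt
        refine hy (hballS ?_)
        rw [mem_ball]
        linarith
    have e3 : (cu * r / 32) ^ n * wtot n = w * r ^ n := by
      rw [hw, mul_right_comm, ← mul_pow]; ring_nf
    rw [e3] at e1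
    have e4 : (1 + K ^ 2 * V + w⁻¹)⁻¹ ≤ w := by
      refine inv_le_of_inv_le₀ hw0 ?_
      have : 0 ≤ K ^ 2 * V := by positivity
      linarith
    calc (1 + K ^ 2 * V + w⁻¹)⁻¹ * g xr ^ 2 * r ^ n ≤ w * g xr ^ 2 * r ^ n := by gcongr
      _ ≤ ∫ y, mker xr (cu * r / 32) y * g y ^ 2 := by linarith
      _ ≤ _ := e2
  · have hbd : ∀ y ∈ S, g y ^ 2 ≤ (K * g xr) ^ 2 := by
      intro y hy
      refine pow_le_pow_left₀ (P.nonneg y) (hK U g hU hub P y (hSU hy) xr hxr r hr hxrδ ?_) 2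
      have h1 := hSb hy
      rw [mem_ball] at h1
      linarith [dist_triangle y x xr]
    have h1 : ∫ y in S, g y ^ 2 ≤ ∫ _ in S, (K * g xr) ^ 2 :=
      setIntegral_mono_on hgint (integrableOn_const hSfin.ne) hSo.measurableSet hbd
    rw [setIntegral_const, smul_eq_mul] at h1
    have h2 : (volume : Measure (En n)).real S ≤ r ^ n * V := by
      rw [← hVS]
      exact measureReal_mono hSb measure_ball_lt_top.ne
    calc ∫ y in S, g y ^ 2 ≤ (volume : Measure (En n)).real S * (K * g xr) ^ 2 := h1
      _ ≤ (r ^ n * V) * (K * g xr) ^ 2 := by gcongr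
      _ = (K ^ 2 * V) * g xr ^ 2 * r ^ n := by ring
      _ ≤ (1 + K ^ 2 * V + w⁻¹) * g xr ^ 2 * r ^ n := by
        gcongr
        have : 0 < w⁻¹ := by positivity
        linarith
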